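/- Let t, α be real and pc > 0 with π·α²/2 = t·(pc + 1)²/pc. Define g : ℝ → ℝ by g(u) = (πα²/4)·(pc + 1 + u/√2)/((pc + 1)² + u² + √2·(pc + 1)·u) + (t/4)·log(pc² + u² + √2·pc·u). Then g′(0) = 0 and g″(0) = 0. -/

import Mathlib

open Real

/-- Eq. (31b) of the paper: the saddle-point property `g′(0) = 0 = g″(0)` forced
by the defining relation `π·α²/2 = t·(pc + 1)²/pc` of the portcullis variable. -/
theorem stmt9 (t α pc : ℝ) (hpc : 0 < pc)
    (hsaddle : π * α ^ 2 / 2 = t * (pc + 1) ^ 2 / pc)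
    (g : ℝ → ℝ)
    (hg : ∀ u : ℝ, g u =
      π * α ^ 2 / 4 * (pc + 1 + u / Real.sqrt 2)
          / ((pc + 1) ^ 2 + u ^ 2 + Real.sqrt 2 * (pc + 1) * u)
        + t / 4 * Real.log (pc ^ 2 + u ^ 2 + Real.sqrt 2 * pc * u)) :
    deriv g 0 = 0 ∧ deriv (deriv g) 0 = 0 := by
  have hs : Real.sqrt 2 * Real.sqrt 2 = 2 := Real.mul_self_sqrt (by norm_num)
  have hs0 : 0 < Real.sqrt 2 := Real.sqrt_pos.mpr (by norm_num)
  have hdiv : ∀ u : ℝ, u / Real.sqrt 2 = Real.sqrt 2 / 2 * u := by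
    intro u
    field_simp
    linear_combination (-u) * hs
  simp only [hdiv] at hg
  have hA : π * α ^ 2 / 4 = t * (pc + 1) ^ 2 / (2 * pc) := by
    have : t * (pc + 1) ^ 2 / (2 * pc) = t * (pc + 1) ^ 2 / pc / 2 := by
      field_simp
    rw [this, ← hsaddle]; ring
  rw [hA] at hg
  generalize Real.sqrt 2 = s at *
  have hpos : ∀ q u : ℝ, 0 < q → 0 < q ^ 2 + u ^ 2 + s * q * u := by
    intro q u hq
    have e : q ^ 2 + u ^ 2 + s * q * u = (u + s * q / 2) ^ 2 + q ^ 2 / 2 := by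
      linear_combination (-(q ^ 2) / 4) * hs
    rw [e]; positivity
  have hq : 0 < pc + 1 := by linarith
  have hQ : ∀ q u : ℝ, HasDerivAt (fun u : ℝ => q ^ 2 + u ^ 2 + s * q * u) (2 * u + s * q) u := by
    intro q u
    have h := (((hasDerivAt_id u).pow 2).const_add (q ^ 2)).add
      ((hasDerivAt_id u).const_mul (s * q))
    exact h.congr_deriv (by simp)
  have hL : ∀ c d u : ℝ, HasDerivAt (fun u : ℝ => d + c * u) c u := by
    intro c d u
    have h := ((hasDerivAt_id u).const_mul c).const_add d
    exact h.congr_deriv (by simp)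
  generalize hAA : t * (pc + 1) ^ 2 / (2 * pc) = A at *
  have hgf := funext hg
  have hd : ∀ u, HasDerivAt g
      ((A * (s / 2) * ((pc + 1) ^ 2 + u ^ 2 + s * (pc + 1) * u)
        - A * (pc + 1 + s / 2 * u) * (2 * u + s * (pc + 1)))
        / ((pc + 1) ^ 2 + u ^ 2 + s * (pc + 1) * u) ^ 2
        + t / 4 * ((2 * u + s * pc) / (pc ^ 2 + u ^ 2 + s * pc * u))) u := by
    intro u
    rw [hgf]
    exact (((hL (s / 2) (pc + 1) u).const_mul A).div (hQ (pc + 1) u) (hpos _ u hq).ne').add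
      (((hQ pc u).log (hpos _ u hpc).ne').const_mul (t / 4))
  have hdf := funext fun u => (hd u).deriv
  constructor
  · rw [(hd 0).deriv, ← hAA]
    field_simp
    ring
  · have hl2 : HasDerivAt (fun u : ℝ => 2 * u + s * pc) 2 0 := by
      simpa [add_comm] using hL 2 (s * pc) 0
    have hl3 : HasDerivAt (fun u : ℝ => 2 * u + s * (pc + 1)) 2 0 := by
      simpa only [add_comm] using hL 2 (s * (pc + 1)) 0
    have h2 := (((((hQ (pc + 1) 0).const_mul (A * (s / 2))).sub
      (((hL (s / 2) (pc + 1) 0).const_mul A).mul hl3)).div ((hQ (pc + 1) 0).pow 2)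
      (pow_ne_zero 2 (hpos _ 0 hq).ne')).add
      ((hl2.div (hQ pc 0) (hpos _ 0 hpc).ne').const_mul (t / 4)))
    rw [hdf]
    refine (HasDerivAt.deriv h2).trans ?_
    have hs2 : s ^ 2 = 2 := by rw [sq, hs]
    simp
    field_simp
    ring_nf
    simp only [hs2]
    ring
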